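/- arXiv:2002.07889 — 3 statements merged into one kernel-verified Lean document; each statement's English description precedes it below -/
import Mathlib

section
/- Let f be a map from nonempty finite multisets of real numbers to ℝ (a non-identifying facility location mechanism). Suppose f is strategyproof w.r.t. manipulation, replication, and hiding: for every nonempty finite multiset A (an agent's true locations), every finite multiset B (the other agents' locations, possibly empty), and every nonempty finite multiset A′, one has l(f(A + B), A) ≤ l(f(A′ + B), A). Then there exists c ∈ ℝ with f(S) = c for every multiset S of reals with |S| ≥ 4. -/
/-- The loss of a finite multiset `S` of reals at a point `x`:
`l(x,S) = ∑_{y ∈ S} |x - y|` (with multiplicity). -/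
noncomputable def loss (x : ℝ) (S : Multiset ℝ) : ℝ :=
  (S.map fun y => |x - y|).sum

/-- Left endpoint `t_⌈k/2⌉` of the median interval of a (nonempty) multiset of reals. -/
noncomputable def medLo (S : Multiset ℝ) : ℝ :=
  (S.sort (· ≤ ·)).getD ((S.card - 1) / 2) 0

/-- Right endpoint `t_{⌊k/2⌋+1}` of the median interval of a (nonempty) multiset of reals. -/
noncomputable def medHi (S : Multiset ℝ) : ℝ :=
  (S.sort (· ≤ ·)).getD (S.card / 2) 0

/-!
A point holding a strict majority of the reports is the unique minimizer of the total distance, so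
a single agent owning all of them can misreport and obtain that point as soon as `f` takes it as a
value. If `a` and `b` are both values of `f`, then `f` selects `a` on `{b, a, a}` and `b` on
`{b, b, b, a, a}`; an agent with the single location `b`, facing `{a, a}`, gains by replicating it
unless `a = b`.
-/

/-- The total distance from `x` to the points of a finite multiset `S`, with multiplicity: the
metric-space version of `loss`. -/
noncomputable def totalDist {X : Type*} [PseudoMetricSpace X] (x : X) (S : Multiset X) : ℝ :=
  (S.map fun y => dist x y).sum

/-- Strategyproofness of the non-identifying mechanism `f` with respect to manipulation, replication
and hiding: an agent with locations `A`, facing the reports `B` of the others, never gains by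
reporting `A'` instead. The value `f 0` is unconstrained. -/
def IsStrategyproof {X : Type*} [PseudoMetricSpace X] (f : Multiset X → X) : Prop :=
  ∀ A B A' : Multiset X, A ≠ 0 → A' ≠ 0 → totalDist (f (A + B)) A ≤ totalDist (f (A' + B)) A

theorem loss_eq_totalDist (x : ℝ) (S : Multiset ℝ) : loss x S = totalDist x S := rfl

section PseudoMetricSpace

variable {X : Type*} [PseudoMetricSpace X]

theorem totalDist_add (x : X) (S T : Multiset X) :
    totalDist x (S + T) = totalDist x S + totalDist x T := by
  simp only [totalDist, Multiset.map_add, Multiset.sum_add]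

theorem totalDist_replicate (x a : X) (m : ℕ) :
    totalDist x (Multiset.replicate m a) = m * dist x a := by
  simp only [totalDist, Multiset.map_replicate, Multiset.sum_replicate, nsmul_eq_mul]

theorem totalDist_singleton (x a : X) : totalDist x {a} = dist x a := by
  simp only [totalDist, Multiset.map_singleton, Multiset.sum_singleton]

theorem totalDist_le_card_mul_dist_add (a x : X) (S : Multiset X) :
    totalDist a S ≤ S.card * dist a x + totalDist x S :=
  calc totalDist a S ≤ (S.map fun y => dist a x + dist x y).sum :=
        Multiset.sum_map_le_sum_map _ _ fun y _ => dist_triangle a x y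
    _ = S.card * dist a x + totalDist x S := by
        simp only [totalDist, Multiset.sum_map_add, Multiset.map_const', Multiset.sum_replicate,
          nsmul_eq_mul]

end PseudoMetricSpace

section MetricSpace

variable {X : Type*} [MetricSpace X]

theorem eq_of_totalDist_le_of_card_lt {a x : X} {m : ℕ} {S : Multiset X} (hm : S.card < m)
    (h : totalDist x (Multiset.replicate m a + S) ≤ totalDist a (Multiset.replicate m a + S)) :
    x = a := by
  rw [totalDist_add, totalDist_add, totalDist_replicate, totalDist_replicate, dist_self,
    mul_zero, zero_add] at h
  have h_triangle := totalDist_le_card_mul_dist_add a x S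
  rw [dist_comm a x] at h_triangle
  have hm' : (0 : ℝ) < m - S.card := sub_pos.2 (Nat.cast_lt.2 hm)
  have h_excess : (m - S.card : ℝ) * dist x a ≤ 0 := by linarith
  exact dist_le_zero.1 (nonpos_of_mul_nonpos_right h_excess hm')

namespace IsStrategyproof

variable {f : Multiset X → X}

theorem apply_replicate_add_of_card_lt (hf : IsStrategyproof f) {S T : Multiset X} {m : ℕ}
    (hS : S ≠ 0) (hm : T.card < m) : f (Multiset.replicate m (f S) + T) = f S := by
  have h_ne : Multiset.replicate m (f S) + T ≠ 0 := by
    rw [← Multiset.card_pos, Multiset.card_add, Multiset.card_replicate]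
    omega
  have h_hide := hf _ 0 S h_ne hS
  rw [add_zero, add_zero] at h_hide
  exact eq_of_totalDist_le_of_card_lt hm h_hide

theorem apply_eq_apply (hf : IsStrategyproof f) {S T : Multiset X} (hS : S ≠ 0) (hT : T ≠ 0) :
    f S = f T := by
  have h_truthful : f ({f T} + Multiset.replicate 2 (f S)) = f S := by
    rw [add_comm]
    exact hf.apply_replicate_add_of_card_lt hS (by simp)
  have h_replicated : f (Multiset.replicate 3 (f T) + Multiset.replicate 2 (f S)) = f T :=
    hf.apply_replicate_add_of_card_lt hT (by simp)
  have h_gain := hf {f T} (Multiset.replicate 2 (f S)) (Multiset.replicate 3 (f T))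
    (Multiset.singleton_ne_zero _) (by simp)
  rw [h_truthful, h_replicated, totalDist_singleton, totalDist_singleton, dist_self] at h_gain
  exact dist_le_zero.1 h_gain

end IsStrategyproof

theorem stmt_2_general {f : Multiset X → X} (hf : IsStrategyproof f) :
    ∃ c : X, ∀ S : Multiset X, S ≠ 0 → f S = c :=
  ⟨f {f 0}, fun _ hS => hf.apply_eq_apply hS (Multiset.singleton_ne_zero _)⟩

end MetricSpace

/-- with non-identifying locations, any mechanism on nonempty finite
multisets of reals that is strategyproof w.r.t. manipulation, replication and hiding
is constant on all multisets with at least 4 elements. -/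
theorem stmt_2 (f : Multiset ℝ → ℝ)
    (hsp : ∀ A B A' : Multiset ℝ, A ≠ 0 → A' ≠ 0 →
      loss (f (A + B)) A ≤ loss (f (A' + B)) A) :
    ∃ c : ℝ, ∀ S : Multiset ℝ, 4 ≤ S.card → f S = c := by
  have hf : IsStrategyproof f := by simpa only [IsStrategyproof, loss_eq_totalDist] using hsp
  obtain ⟨c, hc⟩ := stmt_2_general hf
  exact ⟨c, fun S hS => hc S (Multiset.card_pos.1 (by omega))⟩
end

section
/- Fix n ≥ 1 and extended reals α_1,…,α_{n−1} ∈ ℝ ∪ {−∞,+∞}. Restrict attention to profiles D = (D_1,…,D_n) in which every D_i is a nonempty finite multiset of reals whose median interval med(D_i) is a single point y_i* (each agent has a unique optimal location), and define π(D) = med(y_1*,…,y_n*,α_1,…,α_{n−1}), the n-th smallest of these 2n−1 extended-real values (always a real number). Then π is strong group strategyproof w.r.t. manipulation, replication, and hiding on this domain: there is no nonempty coalition S of agents, profile D in the domain, and family of nonempty finite multisets (D_j′)_{j∈S} each with a single-point median interval, such that l(π(D_S′, D_{−S}), D_j) ≤ l(π(D), D_j) for every j ∈ S with strict inequality for some j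 ∈ S. -/
/-- The `k`-th smallest element of a multiset of extended reals. -/
noncomputable def nthSmallest (M : Multiset EReal) (k : ℕ) : EReal :=
  (M.sort (· ≤ ·)).getD (k - 1) 0

/-!
Suppose that changing the reports moves the chosen order statistic from `x` to `x' > x`. Then fewer
values lie in `(-∞, x]` than before, so some agent moved its peak from `y ≤ x` to a point above `x`.
This agent deviated, and its true peak `y`, the old outcome `x` and the new outcome `x'` lie in this
order. Since the loss of a multiset with a single median increases strictly away from that median,
the agent is strictly worse off. The case `x' < x` is symmetric. Hence every deviation that changes
the outcome hurts one of the deviating agents.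
-/

/-- A cost function on an ordered set of outcomes is strictly single-peaked at `p` if it
strictly increases as the outcome moves away from `p` in either direction. (The peak is one of the
preference, hence a minimum of the cost.) -/
def IsSinglePeakedAt {X Y : Type*} [Preorder X] [Preorder Y] (f : X → Y) (p : X) : Prop :=
  StrictAntiOn f (Set.Iic p) ∧ StrictMonoOn f (Set.Ici p)

theorem IsSinglePeakedAt.lt_of_mem_uIcc {X Y : Type*} [LinearOrder X] [Preorder Y] {f : X → Y}
    {p x x' : X} (hf : IsSinglePeakedAt f p) (hx : x ∈ Set.uIcc p x') (hne : x ≠ x') :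
    f x < f x' := by
  rcases Set.mem_uIcc.1 hx with ⟨hpx, hxx'⟩ | ⟨hx'x, hxp⟩
  · exact hf.2 hpx (hpx.trans hxx') (hxx'.lt_of_ne hne)
  · exact hf.1 (hx'x.trans hxp) hxp (hx'x.lt_of_ne' hne)

/-- Strong group strategyproofness of the mechanism `π` for reports in `dom`, where
`cost x r` is the cost of the outcome `x` to an agent whose true report is `r`: no coalition `S` can
replace its true reports `D` by `D'` so that no member is worse off and some member is better off.
When reports are multisets, choosing `D'` freely covers replicating and hiding data points. -/
def IsStrongGroupStrategyproof {ι R X Y : Type*} [DecidableEq ι] [Preorder Y]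
    (dom : Set R) (cost : X → R → Y) (π : (ι → R) → X) : Prop :=
  ¬ ∃ (S : Finset ι) (D D' : ι → R),
      (∀ j, D j ∈ dom) ∧ (∀ j ∈ S, D' j ∈ dom) ∧
      (∀ j ∈ S, cost (π (S.piecewise D' D)) (D j) ≤ cost (π D) (D j)) ∧
      ∃ j ∈ S, cost (π (S.piecewise D' D)) (D j) < cost (π D) (D j)

theorem IsStrongGroupStrategyproof.of_exists_cost_lt {ι R X Y : Type*} [DecidableEq ι] [Preorder Y]
    {dom : Set R} {cost : X → R → Y} {π : (ι → R) → X}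
    (h : ∀ D E : ι → R, (∀ j, D j ∈ dom) → (∀ j, E j ∈ dom) → π D ≠ π E →
      ∃ j, D j ≠ E j ∧ cost (π D) (D j) < cost (π E) (D j)) :
    IsStrongGroupStrategyproof dom cost π := by
  rintro ⟨S, D, D', hD, hD', hle, j, -, hlt⟩
  have hE : ∀ j, S.piecewise D' D j ∈ dom := fun j => by
    by_cases hj : j ∈ S
    · simpa only [Finset.piecewise_eq_of_mem _ _ _ hj] using hD' j hj
    · simpa only [Finset.piecewise_eq_of_notMem _ _ _ hj] using hD j
  have hne : π D ≠ π (S.piecewise D' D) := fun heq => (heq ▸ hlt).false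
  obtain ⟨i, hi, hworse⟩ := h D _ hD hE hne
  have hiS : i ∈ S := by
    by_contra hiS
    exact hi (Finset.piecewise_eq_of_notMem _ _ _ hiS).symm
  exact (hle i hiS).not_gt hworse

section OrderStatistic

theorem getElem_iff_lt_countP_of_pairwise_le {β : Type*} [LinearOrder β] {P : β → Prop}
    [DecidablePred P] (hP : IsLowerSet {x | P x}) {l : List β} (hl : l.Pairwise (· ≤ ·)) {i : ℕ}
    (hi : i < l.length) : P l[i] ↔ i < l.countP (P ·) := by
  induction l generalizing i with
  | nil => simp at hi
  | cons a t ih =>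
    obtain ⟨ha, ht⟩ := List.pairwise_cons.1 hl
    by_cases h : P a
    · rw [List.countP_cons_of_pos (by simpa using h)]
      cases i with
      | zero => simpa using h
      | succ i => simpa using ih ht (by simpa using hi)
    · have hnot : ∀ x ∈ a :: t, ¬ P x :=
        List.forall_mem_cons.2 ⟨h, fun x hx hPx => h (hP (ha x hx) hPx)⟩
      have hzero : (a :: t).countP (P ·) = 0 := List.countP_eq_zero.2 (by simpa using hnot)
      simp only [hzero, not_lt_zero, iff_false]
      exact hnot _ (List.getElem_mem hi)

theorem sort_getD_iff_lt_countP {β : Type*} [LinearOrder β] {P : β → Prop} [DecidablePred P]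
    (hP : IsLowerSet {x | P x}) {M : Multiset β} {i : ℕ} (hi : i < M.card) (d : β) :
    P ((M.sort (· ≤ ·)).getD i d) ↔ i < M.countP P := by
  have hlen : i < (M.sort (· ≤ ·)).length := by rwa [Multiset.length_sort]
  rw [List.getD_eq_getElem _ _ hlen,
    getElem_iff_lt_countP_of_pairwise_le hP (M.pairwise_sort (· ≤ ·)) hlen, ← Multiset.coe_countP,
    Multiset.sort_eq]

theorem nthSmallest_iff_le_countP {P : EReal → Prop} [DecidablePred P]
    (hP : IsLowerSet {x | P x}) {M : Multiset EReal} {k : ℕ} (hk : 1 ≤ k) (hkM : k ≤ M.card) :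
    P (nthSmallest M k) ↔ k ≤ M.countP P := by
  rw [nthSmallest, sort_getD_iff_lt_countP hP (by omega)]
  omega

variable {ι : Type*} [Fintype ι] {A : Multiset EReal} {k : ℕ}

theorem nthSmallest_map_add_imp {P : EReal → Prop} (hP : IsLowerSet {x | P x}) (hk : 1 ≤ k)
    (hkA : k ≤ Fintype.card ι + A.card) {y z : ι → EReal} (hyz : ∀ i, P (y i) → P (z i))
    (hy : P (nthSmallest (Finset.univ.val.map y + A) k)) :
    P (nthSmallest (Finset.univ.val.map z + A) k) := by
  classical
  have hcard (w : ι → EReal) : k ≤ (Finset.univ.val.map w + A).card := by simpa using hkA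
  rw [nthSmallest_iff_le_countP hP hk (hcard _)] at hy ⊢
  refine hy.trans ?_
  simp only [Multiset.countP_add, Multiset.countP_map]
  exact Nat.add_le_add_right
    (Multiset.card_le_card (Multiset.monotone_filter_right _ fun i => hyz i)) _

theorem exists_ne_and_nthSmallest_mem_uIcc (hk : 1 ≤ k) (hkA : k ≤ Fintype.card ι + A.card)
    {y z : ι → EReal} {x x' : EReal} (hx : nthSmallest (Finset.univ.val.map y + A) k = x)
    (hx' : nthSmallest (Finset.univ.val.map z + A) k = x') (hne : x ≠ x') :
    ∃ i, y i ≠ z i ∧ x ∈ Set.uIcc (y i) x' := by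
  rcases hne.lt_or_gt with hlt | hgt
  · obtain ⟨i, hyi, hzi⟩ : ∃ i, y i ≤ x ∧ x < z i := by
      by_contra! h
      have : x' ≤ x := hx' ▸ nthSmallest_map_add_imp (isLowerSet_Iic x) hk hkA h hx.le
      exact hlt.not_ge this
    exact ⟨i, (hyi.trans_lt hzi).ne, Set.mem_uIcc_of_le hyi hlt.le⟩
  · obtain ⟨i, hzi, hyi⟩ : ∃ i, z i < x ∧ x ≤ y i := by
      by_contra! h
      have : x < x :=
        hx ▸ nthSmallest_map_add_imp (isLowerSet_Iio x) hk hkA h (hx'.trans_lt hgt)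
      exact this.false
    exact ⟨i, (hzi.trans_le hyi).ne', Set.mem_uIcc_of_ge hgt.le hyi⟩

end OrderStatistic

section Median

variable {S : Multiset ℝ} {p q : ℝ}

theorem medHi_le_iff (hS : S ≠ 0) : medHi S ≤ p ↔ S.card < 2 * S.countP (· ≤ p) := by
  have hcard : 0 < S.card := Multiset.card_pos.2 hS
  rw [medHi, sort_getD_iff_lt_countP (isLowerSet_Iic p) (by omega)]
  omega

theorem le_medLo_iff (hS : S ≠ 0) : p ≤ medLo S ↔ 2 * S.countP (· < p) < S.card := by
  have hcard : 0 < S.card := Multiset.card_pos.2 hS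
  rw [← not_lt, medLo, sort_getD_iff_lt_countP (isLowerSet_Iio p) (by omega)]
  omega

theorem loss_cons (x a : ℝ) (S : Multiset ℝ) : loss x (a ::ₘ S) = |x - a| + loss x S := by
  simp only [loss, Multiset.map_cons, Multiset.sum_cons]

-- Moving from `p` to `q ≥ p` adds `q - p` for each point `≤ p` and saves at most that for the rest.
theorem mul_two_countP_le_sub_card_le_loss_sub (hpq : p ≤ q) (S : Multiset ℝ) :
    (q - p) * (2 * S.countP (· ≤ p) - S.card) ≤ loss q S - loss p S := by
  induction S using Multiset.induction_on with
  | empty => simp [loss]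
  | cons a S ih =>
    simp only [loss_cons, Multiset.card_cons, Multiset.countP_cons]
    push_cast
    split_ifs with ha
    · have habs : |q - a| - |p - a| = q - p := by
        rw [abs_of_nonneg (by linarith), abs_of_nonneg (by linarith)]
        ring
      linarith
    · have habs : -(q - p) ≤ |q - a| - |p - a| := by
        have := abs_sub_le p q a
        rw [abs_sub_comm p q, abs_of_nonneg (sub_nonneg.2 hpq)] at this
        linarith
      linarith

theorem loss_neg_map_neg (x : ℝ) (S : Multiset ℝ) : loss (-x) (S.map Neg.neg) = loss x S := by
  simp only [loss, Multiset.map_map, Function.comp_apply, neg_sub_neg, abs_sub_comm]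

theorem mul_card_sub_two_countP_lt_le_loss_sub (hqp : q ≤ p) (S : Multiset ℝ) :
    (p - q) * (S.card - 2 * S.countP (· < p)) ≤ loss q S - loss p S := by
  have hcount : S.countP (· < p) + (S.map Neg.neg).countP (· ≤ -p) = S.card := by
    simp only [Multiset.countP_map, neg_le_neg_iff, ← Multiset.countP_eq_card_filter]
    simpa only [not_lt] using (S.card_eq_countP_add_countP (· < p)).symm
  have hneg := mul_two_countP_le_sub_card_le_loss_sub (neg_le_neg hqp) (S.map Neg.neg)
  rw [loss_neg_map_neg, loss_neg_map_neg, Multiset.card_map] at hneg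
  rw [← hcount] at hneg ⊢
  push_cast at hneg ⊢
  linarith

theorem loss_lt_loss_of_medHi_le (hS : S ≠ 0) (hp : medHi S ≤ p) (hpq : p < q) :
    loss p S < loss q S := by
  have hcount : (S.card : ℝ) < 2 * S.countP (· ≤ p) := by exact_mod_cast (medHi_le_iff hS).1 hp
  have hslope := mul_two_countP_le_sub_card_le_loss_sub hpq.le S
  have hpos := mul_pos (sub_pos.2 hpq) (sub_pos.2 hcount)
  linarith

theorem loss_lt_loss_of_le_medLo (hS : S ≠ 0) (hp : p ≤ medLo S) (hqp : q < p) :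
    loss p S < loss q S := by
  have hcount : 2 * S.countP (· < p) < (S.card : ℝ) := by exact_mod_cast (le_medLo_iff hS).1 hp
  have hslope := mul_card_sub_two_countP_lt_le_loss_sub hqp.le S
  have hpos := mul_pos (sub_pos.2 hqp) (sub_pos.2 hcount)
  linarith

theorem isSinglePeakedAt_loss (hS : S ≠ 0) (hmed : medLo S = medHi S) :
    IsSinglePeakedAt (loss · S) (medLo S) :=
  ⟨fun _ _ _ hy hxy => loss_lt_loss_of_le_medLo hS hy hxy,
    fun _ hx _ _ hxy => loss_lt_loss_of_medHi_le hS (hmed ▸ hx) hxy⟩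

end Median

/-- Moulin's generalized medians; the elements of `A` are the peaks of the phantom voters. -/
theorem stmt_11_general {ι R Y : Type*} [Fintype ι] [DecidableEq ι] [Preorder Y]
    {dom : Set R} {cost : ℝ → R → Y} {peak : R → ℝ}
    (hpeak : ∀ r ∈ dom, IsSinglePeakedAt (cost · r) (peak r))
    {A : Multiset EReal} {k : ℕ} (hk : 1 ≤ k) (hkA : k ≤ Fintype.card ι + A.card)
    {π : (ι → R) → ℝ}
    (hπ : ∀ D : ι → R, (∀ j, D j ∈ dom) →
      (π D : EReal) = nthSmallest (Finset.univ.val.map (fun i => (peak (D i) : EReal)) + A) k) :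
    IsStrongGroupStrategyproof dom cost π := by
  refine .of_exists_cost_lt fun D E hD hE hne => ?_
  obtain ⟨i, hi, hmem⟩ := exists_ne_and_nthSmallest_mem_uIcc hk hkA (hπ D hD).symm (hπ E hE).symm
    (EReal.coe_injective.ne hne)
  have hmem' : π D ∈ Set.uIcc (peak (D i)) (π E) := by
    simpa only [Set.mem_uIcc, EReal.coe_le_coe_iff] using hmem
  exact ⟨i, fun h => hi (by rw [h]), (hpeak _ (hD i)).lt_of_mem_uIcc hmem' hne⟩

/-- Theorem 5: on the domain where every agent's report has a
single-point median interval (a unique optimal location `y_i*`), the mechanism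
`π(D) = med(y_1*,…,y_n*,α_1,…,α_{n-1})` is strong group strategyproof w.r.t.
manipulation, replication and hiding: no coalition can deviate (within the domain) so
that no member is strictly worse off and some member is strictly better off. -/
theorem stmt_11 (n : ℕ) (hn : 1 ≤ n) (α : Fin (n - 1) → EReal)
    (π : (Fin n → Multiset ℝ) → ℝ)
    (hπ : ∀ D : Fin n → Multiset ℝ, (∀ j, D j ≠ 0 ∧ medLo (D j) = medHi (D j)) →
      (π D : EReal) =
        nthSmallest
          ((Finset.univ.val.map fun i : Fin n => ((medLo (D i) : ℝ) : EReal)) +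
            Finset.univ.val.map α) n) :
    ¬ ∃ (S : Finset (Fin n)) (D D' : Fin n → Multiset ℝ),
        S.Nonempty ∧ (∀ j, D j ≠ 0 ∧ medLo (D j) = medHi (D j)) ∧
        (∀ j ∈ S, D' j ≠ 0 ∧ medLo (D' j) = medHi (D' j)) ∧
        (∀ j ∈ S, loss (π fun k => if k ∈ S then D' k else D k) (D j)
            ≤ loss (π D) (D j)) ∧
        (∃ j ∈ S, loss (π fun k => if k ∈ S then D' k else D k) (D j)
            < loss (π D) (D j)) := fun ⟨S, D, D', _, hdev⟩ =>
  stmt_11_general (dom := {T | T ≠ 0 ∧ medLo T = medHi T})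
    (fun _ hT => isSinglePeakedAt_loss hT.1 hT.2) hn (by simp) hπ ⟨S, D, D', hdev⟩
end

section
/- Fix n ≥ 1 and an odd m ≥ 1, and let π be a mechanism on profiles D = (D_1,…,D_n) of size-m multisets of reals that is anonymous and strategyproof w.r.t. manipulation (for every agent i, every such profile D, and every size-m multiset D_i′, l(π(D),D_i) ≤ l(π(D_i′,D_{−i}),D_i)). Then for every agent i, every fixed tuple D_{−i} of the other agents' size-m reports, and every y* ∈ ℝ, there exist s, h ∈ ℝ with (s < y* < h or s = h) such that for every size-m multiset D_i whose median is y*: π(D_i,D_{−i}) = s if l(s,D_i) < l(h,D_i), π(D_i,D_{−i}) = h if l(s,D_i) > l(h,D_i), and π(D_i,D_{−i}) ∈ {s,h} if l(s,D_i) = l(h,D_i). -/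
/-- Anonymity, on profiles of size-`m` multisets. -/
def AnonymousM (n m : ℕ) (π : (Fin n → Multiset ℝ) → ℝ) : Prop :=
  ∀ D : Fin n → Multiset ℝ, (∀ j, (D j).card = m) →
    ∀ σ : Equiv.Perm (Fin n), π (D ∘ σ) = π D

/-- Strategyproofness w.r.t. manipulation: an agent may replace her size-`m` report by
any other size-`m` multiset. -/
def StrategyproofM (n m : ℕ) (π : (Fin n → Multiset ℝ) → ℝ) : Prop :=
  ∀ (i : Fin n) (D : Fin n → Multiset ℝ), (∀ j, (D j).card = m) →
    ∀ Di' : Multiset ℝ, Di'.card = m →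
      loss (π D) (D i) ≤ loss (π (Function.update D i Di')) (D i)

/-- Efficiency, on profiles of size-`m` multisets. -/
def EfficientM (n m : ℕ) (π : (Fin n → Multiset ℝ) → ℝ) : Prop :=
  ∀ D : Fin n → Multiset ℝ, (∀ j, (D j).card = m) →
    ¬ ∃ x : ℝ, (∀ j, loss x (D j) ≤ loss (π D) (D j)) ∧
        ∃ j, loss x (D j) < loss (π D) (D j)

/-!
With the other reports fixed, agent `i` chooses from the set `R` of outcomes her reports can reach,
and strategyproofness says that the mechanism gives her a point of `R` of least loss. Reporting a
constant multiset `{z, …, z}` makes the mechanism return a point of `R` nearest to `z`, so `R` is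
closed. When the median `y*` is unique, the loss is strictly decreasing to the left of `y*` and
strictly increasing to the right of it, so only the last point `s` of `R` in `(-∞, y*]` and the
first point `h` of `R` in `[y*, ∞)` can be of least loss. If one of these points does not exist, the
other one takes its place, and if `y* ∈ R`, then both are `y*`.
-/

open Set

section SinglePeaked

variable {α β : Type*} [Preorder β] {l : α → β}

theorem eq_of_isMinOn_of_isGreatest_inter_Iic [PartialOrder α] {R : Set α} {x y s : α}
    (hanti : StrictAntiOn l (Iic y)) (hs : IsGreatest (R ∩ Iic y) s) (hmin : IsMinOn l R x)
    (hx : x ∈ R ∩ Iic y) : x = s := by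
  by_contra hne
  exact (hmin hs.1.1).not_gt (hanti hx.2 hs.1.2 ((hs.2 hx).lt_of_ne hne))

theorem eq_of_isMinOn_of_isLeast_inter_Ici [PartialOrder α] {R : Set α} {x y h : α}
    (hmono : StrictMonoOn l (Ici y)) (hh : IsLeast (R ∩ Ici y) h) (hmin : IsMinOn l R x)
    (hx : x ∈ R ∩ Ici y) : x = h := by
  by_contra hne
  exact (hmin hh.1.1).not_gt (hmono hh.1.2 hx.2 ((hh.2 hx).lt_of_ne' hne))

theorem exists_forall_isMinOn_eq_or_eq [ConditionallyCompleteLinearOrder α] [TopologicalSpace α]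
    [OrderTopology α] {R : Set α} (hR : IsClosed R) (hne : R.Nonempty) (y : α) :
    ∃ s ∈ R, ∃ h ∈ R, (s < y ∧ y < h ∨ s = h) ∧
      ∀ l : α → β, StrictAntiOn l (Iic y) → StrictMonoOn l (Ici y) →
        ∀ x ∈ R, IsMinOn l R x → x = s ∨ x = h := by
  have exists_isGreatest (hL : (R ∩ Iic y).Nonempty) : ∃ s, IsGreatest (R ∩ Iic y) s :=
    ⟨_, (hR.inter isClosed_Iic).isGreatest_csSup hL ⟨y, fun _ hx => hx.2⟩⟩
  have exists_isLeast (hU : (R ∩ Ici y).Nonempty) : ∃ h, IsLeast (R ∩ Ici y) h :=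
    ⟨_, (hR.inter isClosed_Ici).isLeast_csInf hU ⟨y, fun _ hx => hx.2⟩⟩
  rcases (R ∩ Iic y).eq_empty_or_nonempty with hL | hL
  · have above {x} (hx : x ∈ R) : y ≤ x :=
      (lt_of_not_ge fun hxy => eq_empty_iff_forall_notMem.mp hL x ⟨hx, hxy⟩).le
    obtain ⟨h, hh⟩ := exists_isLeast (hne.imp fun x hx => ⟨hx, above hx⟩)
    exact ⟨h, hh.1.1, h, hh.1.1, .inr rfl, fun l _ hmono x hx hmin =>
      .inr (eq_of_isMinOn_of_isLeast_inter_Ici hmono hh hmin ⟨hx, above hx⟩)⟩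
  obtain ⟨s, hs⟩ := exists_isGreatest hL
  rcases (R ∩ Ici y).eq_empty_or_nonempty with hU | hU
  · have below {x} (hx : x ∈ R) : x ≤ y :=
      (lt_of_not_ge fun hyx => eq_empty_iff_forall_notMem.mp hU x ⟨hx, hyx⟩).le
    exact ⟨s, hs.1.1, s, hs.1.1, .inr rfl, fun l hanti _ x hx hmin =>
      .inl (eq_of_isMinOn_of_isGreatest_inter_Iic hanti hs hmin ⟨hx, below hx⟩)⟩
  obtain ⟨h, hh⟩ := exists_isLeast hU
  refine ⟨s, hs.1.1, h, hh.1.1, ?_, fun l hanti hmono x hx hmin => ?_⟩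
  · by_cases hy : y ∈ R
    · have hsy : s = y := le_antisymm hs.1.2 (hs.2 ⟨hy, le_rfl⟩)
      have hhy : h = y := le_antisymm (hh.2 ⟨hy, le_rfl⟩) hh.1.2
      exact .inr (hsy.trans hhy.symm)
    · exact .inl ⟨hs.1.2.lt_of_ne (ne_of_mem_of_not_mem hs.1.1 hy),
        hh.1.2.lt_of_ne' (ne_of_mem_of_not_mem hh.1.1 hy)⟩
  · exact (le_total x y).imp
      (fun hxy => eq_of_isMinOn_of_isGreatest_inter_Iic hanti hs hmin ⟨hx, hxy⟩)
      (fun hyx => eq_of_isMinOn_of_isLeast_inter_Ici hmono hh hmin ⟨hx, hyx⟩)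

end SinglePeaked

theorem isClosed_of_forall_exists_isMinOn_dist {X : Type*} [MetricSpace X] {R : Set X}
    (hR : ∀ z, ∃ x ∈ R, IsMinOn (dist · z) R x) : IsClosed R := by
  refine closure_subset_iff_isClosed.mp fun z hz => ?_
  obtain ⟨x, hxR, hx⟩ := hR z
  have hdist : dist x z ≤ dist z z := hx.closure (by fun_prop) hz
  have hxz : x = z := dist_le_zero.mp (hdist.trans_eq (dist_self z))
  exact hxz ▸ hxR

section Rank

variable {α : Type*} [LinearOrder α] {L : List α} {k : ℕ}

theorem lt_countP_le_getElem_of_sortedLE (hL : L.SortedLE) (hk : k < L.length) :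
    k < L.countP (· ≤ L[k]) := by
  have htake : (L.take (k + 1)).countP (· ≤ L[k]) = (L.take (k + 1)).length := by
    simp only [List.countP_eq_length, decide_eq_true_eq, List.mem_take_iff_getElem]
    rintro _ ⟨j, hj, rfl⟩
    exact hL.getElem_le_getElem_of_le (by omega)
  have hle := (List.take_sublist (k + 1) L).countP_le (p := (· ≤ L[k]))
  rw [htake, List.length_take] at hle
  omega

theorem length_le_add_countP_getElem_le_of_sortedLE (hL : L.SortedLE) (hk : k < L.length) :
    L.length ≤ k + L.countP (L[k] ≤ ·) := by
  have hdrop : (L.drop k).countP (L[k] ≤ ·) = (L.drop k).length := by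
    simp only [List.countP_eq_length, decide_eq_true_eq, List.mem_drop_iff_getElem]
    rintro _ ⟨j, hj, rfl⟩
    exact hL.getElem_le_getElem_of_le (by omega)
  have hle := (List.drop_sublist k L).countP_le (p := (L[k] ≤ ·))
  rw [hdrop, List.length_drop] at hle
  omega

end Rank

section Median

variable {S : Multiset ℝ}

theorem card_lt_two_mul_countP_medLo_le (hS : S ≠ 0) : S.card < 2 * S.countP (medLo S ≤ ·) := by
  have hpos : 0 < S.card := Multiset.card_pos.mpr hS
  have hlen : (S.sort (· ≤ ·)).length = S.card := Multiset.length_sort _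
  have hk : (S.card - 1) / 2 < (S.sort (· ≤ ·)).length := by omega
  have hmed : medLo S = (S.sort (· ≤ ·))[(S.card - 1) / 2] := List.getD_eq_getElem _ _ hk
  have hcount : S.card ≤ (S.card - 1) / 2 + S.countP (medLo S ≤ ·) := by
    have hsort := length_le_add_countP_getElem_le_of_sortedLE (S.pairwise_sort _).sortedLE hk
    rwa [← hmed, ← Multiset.coe_countP, Multiset.sort_eq, hlen] at hsort
  omega

theorem card_lt_two_mul_countP_le_medHi (hS : S ≠ 0) : S.card < 2 * S.countP (· ≤ medHi S) := by
  have hpos : 0 < S.card := Multiset.card_pos.mpr hS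
  have hlen : (S.sort (· ≤ ·)).length = S.card := Multiset.length_sort _
  have hk : S.card / 2 < (S.sort (· ≤ ·)).length := by omega
  have hmed : medHi S = (S.sort (· ≤ ·))[S.card / 2] := List.getD_eq_getElem _ _ hk
  have hcount : S.card / 2 < S.countP (· ≤ medHi S) := by
    have hsort := lt_countP_le_getElem_of_sortedLE (S.pairwise_sort _).sortedLE hk
    rwa [← hmed, ← Multiset.coe_countP, Multiset.sort_eq] at hsort
  omega

theorem medHi_eq_medLo_of_odd_card (hS : Odd S.card) : medHi S = medLo S := by
  have hidx : S.card / 2 = (S.card - 1) / 2 := by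
    obtain ⟨k, hk⟩ := hS
    omega
  rw [medHi, medLo, hidx]

end Median

section Loss

variable {S : Multiset ℝ} {x z : ℝ}

/-- Moving from `x` to `z` gains `|x - z|` on each point beyond `z` and loses at most `|x - z|` on
each other point. -/
theorem loss_add_le_loss_of_wbtw (p : ℝ → Prop) [DecidablePred p]
    (hp : ∀ y ∈ S, p y → Wbtw ℝ x z y) :
    loss z S + (2 * S.countP p - S.card) * |x - z| ≤ loss x S := by
  induction S using Multiset.induction_on with
  | empty => simp [loss]
  | cons a S ih =>
    have hS := ih fun y hy => hp y (Multiset.mem_cons_of_mem hy)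
    have ha : p a → |x - z| + |z - a| = |x - a| := fun hpa => by
      simpa only [Real.dist_eq] using (hp a (Multiset.mem_cons_self a S) hpa).dist_add_dist
    have htri : |z - a| ≤ |x - z| + |x - a| := abs_sub_comm x z ▸ abs_sub_le z x a
    simp only [loss, Multiset.map_cons, Multiset.sum_cons, Multiset.card_cons,
      Multiset.countP_cons] at hS ⊢
    split_ifs with hpa <;> push_cast
    · linarith [ha hpa]
    · linarith

theorem loss_lt_loss_of_wbtw (p : ℝ → Prop) [DecidablePred p] (hp : ∀ y ∈ S, p y → Wbtw ℝ x z y)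
    (hmaj : S.card < 2 * S.countP p) (hxz : x ≠ z) : loss z S < loss x S := by
  have hcount : (0 : ℝ) < 2 * S.countP p - S.card := sub_pos.mpr (mod_cast hmaj)
  have hgain : 0 < (2 * S.countP p - S.card) * |x - z| :=
    mul_pos hcount (abs_pos.mpr (sub_ne_zero.mpr hxz))
  linarith [loss_add_le_loss_of_wbtw p hp]

theorem strictAntiOn_loss_Iic_medLo (hS : S ≠ 0) : StrictAntiOn (loss · S) (Iic (medLo S)) :=
  fun _ _ _ hz hxz => loss_lt_loss_of_wbtw (medLo S ≤ ·)
    (fun _ _ hy => .of_le_of_le hxz.le (le_trans hz hy))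
    (card_lt_two_mul_countP_medLo_le hS) hxz.ne

theorem strictMonoOn_loss_Ici_medHi (hS : S ≠ 0) : StrictMonoOn (loss · S) (Ici (medHi S)) :=
  fun _ hz _ _ hzx => loss_lt_loss_of_wbtw (· ≤ medHi S)
    (fun _ _ hy => (Wbtw.of_le_of_le (le_trans hy hz) hzx.le).symm)
    (card_lt_two_mul_countP_le_medHi hS) hzx.ne'

theorem loss_replicate (m : ℕ) (x z : ℝ) : loss x (Multiset.replicate m z) = m * dist x z := by
  simp [loss, Real.dist_eq]

end Loss

/-- The option set of agent `i`: the outcomes that she can reach with reports of size `m` when the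
other agents report `D`. The entry `D i` is ignored. -/
def optionSet {n : ℕ} (m : ℕ) (π : (Fin n → Multiset ℝ) → ℝ) (i : Fin n)
    (D : Fin n → Multiset ℝ) : Set ℝ :=
  (fun S => π (Function.update D i S)) '' {S | S.card = m}

section OptionSet

variable {n m : ℕ} {π : (Fin n → Multiset ℝ) → ℝ} {i : Fin n} {D : Fin n → Multiset ℝ}

theorem mem_optionSet {S : Multiset ℝ} (hS : S.card = m) :
    π (Function.update D i S) ∈ optionSet m π i D :=
  mem_image_of_mem _ hS

theorem StrategyproofM.isMinOn_optionSet (hsp : StrategyproofM n m π)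
    (hD : ∀ j, j ≠ i → (D j).card = m) {S : Multiset ℝ} (hS : S.card = m) :
    IsMinOn (loss · S) (optionSet m π i D) (π (Function.update D i S)) := by
  rintro _ ⟨T, hT, rfl⟩
  have hcard : ∀ j, (Function.update D i S j).card = m :=
    (Function.forall_update_iff D fun _ T => T.card = m).mpr ⟨hS, hD⟩
  simpa using hsp i (Function.update D i S) hcard T hT

theorem StrategyproofM.isClosed_optionSet (hsp : StrategyproofM n m π) (hm : m ≠ 0)
    (hD : ∀ j, j ≠ i → (D j).card = m) : IsClosed (optionSet m π i D) := by
  refine isClosed_of_forall_exists_isMinOn_dist fun z => ?_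
  have hz : (Multiset.replicate m z).card = m := Multiset.card_replicate m z
  refine ⟨_, mem_optionSet hz, fun r hr => ?_⟩
  have hle : loss _ _ ≤ loss r _ := hsp.isMinOn_optionSet hD hz hr
  rw [loss_replicate, loss_replicate] at hle
  exact le_of_mul_le_mul_left hle (by positivity)

end OptionSet

theorem stmt_14_general (n m : ℕ) (hm : m ≠ 0) (π : (Fin n → Multiset ℝ) → ℝ)
    (hsp : StrategyproofM n m π) (i : Fin n) (D : Fin n → Multiset ℝ)
    (hD : ∀ j, j ≠ i → (D j).card = m) (ystar : ℝ) :
    ∃ s h : ℝ, (s < ystar ∧ ystar < h ∨ s = h) ∧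
      ∀ Di : Multiset ℝ, Di.card = m → medLo Di = ystar → medHi Di = ystar →
        (loss s Di < loss h Di → π (Function.update D i Di) = s) ∧
        (loss h Di < loss s Di → π (Function.update D i Di) = h) ∧
        (loss s Di = loss h Di →
          π (Function.update D i Di) = s ∨ π (Function.update D i Di) = h) := by
  have hne : (optionSet m π i D).Nonempty :=
    ⟨_, mem_optionSet (Multiset.card_replicate m ystar)⟩
  obtain ⟨s, hs, h, hh, hsh, hpeak⟩ :=
    exists_forall_isMinOn_eq_or_eq (β := ℝ) (hsp.isClosed_optionSet hm hD) hne ystar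
  refine ⟨s, h, hsh, fun S hS hlo hhi => ?_⟩
  have hS0 : S ≠ 0 := fun h0 => hm (by rw [← hS, h0, Multiset.card_zero])
  have hmin : IsMinOn (loss · S) (optionSet m π i D) (π (Function.update D i S)) :=
    hsp.isMinOn_optionSet hD hS
  have hor := hpeak _ (hlo ▸ strictAntiOn_loss_Iic_medLo hS0)
    (hhi ▸ strictMonoOn_loss_Ici_medHi hS0) _ (mem_optionSet hS) hmin
  exact ⟨fun hlt => hor.resolve_right fun heq => (hmin hs).not_gt (heq ▸ hlt),
    fun hlt => hor.resolve_left fun heq => (hmin hh).not_gt (heq ▸ hlt), fun _ => hor⟩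

/-- Lemma 5, odd case: for odd `m`, an anonymous mechanism that is
strategyproof w.r.t. manipulation has, fixing the other agents' size-`m` reports and
agent `i`'s (unique) median `y*`, at most two possible outputs `s, h` with
`s < y* < h` or `s = h`, selected as in Eqn. (7). -/
theorem stmt_14 (n m : ℕ) (hn : 1 ≤ n) (hm : Odd m) (π : (Fin n → Multiset ℝ) → ℝ)
    (hanon : AnonymousM n m π) (hsp : StrategyproofM n m π)
    (i : Fin n) (D : Fin n → Multiset ℝ) (hD : ∀ j, j ≠ i → (D j).card = m)
    (ystar : ℝ) :
    ∃ s h : ℝ, (s < ystar ∧ ystar < h ∨ s = h) ∧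
      ∀ Di : Multiset ℝ, Di.card = m → medLo Di = ystar →
        (loss s Di < loss h Di → π (Function.update D i Di) = s) ∧
        (loss h Di < loss s Di → π (Function.update D i Di) = h) ∧
        (loss s Di = loss h Di →
          π (Function.update D i Di) = s ∨ π (Function.update D i Di) = h) := by
  have medHi_eq (S : Multiset ℝ) (hS : S.card = m) : medHi S = medLo S :=
    medHi_eq_medLo_of_odd_card (hS ▸ hm)
  obtain ⟨s, h, hsh, hchoice⟩ := stmt_14_general n m hm.pos.ne' π hsp i D hD ystar
  exact ⟨s, h, hsh, fun S hS hy => hchoice S hS hy ((medHi_eq S hS).trans hy)⟩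
end
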